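/- arXiv:2004.02223 — 3 statements merged into one kernel-verified Lean document; each statement's English description precedes it below -/
import Mathlib

section
/- Let U ⊆ ℝ⁵ be open and let Γ_{mnP} : U → ℝ be differentiable functions for internal indices m,n ∈ {4,5} and P ∈ {1,…,5}. Let G⁴⁴ = G⁵⁵ > 0 be real constants and set g := √((G⁴⁴)² + (G⁵⁵)²). Define the internal curvature components K_{mnPQ} := ∂_PΓ_{mnQ} − ∂_QΓ_{mnP} + Σ_{h∈{4,5}} G^{hh}(Γ_{mhP}Γ_{hnQ} − Γ_{hnP}Γ_{mhQ}). Define the potentials B_P := (Γ_{55P}+Γ_{44P})/√2, A³_P := (Γ_{55P}−Γ_{44P})/√2, A¹_P := (Γ_{45P}+Γ_{54P})/√2, A²_P := (Γ_{45P}−Γ_{54P})/√2, and the field strengths B_{PQ} := (K_{55PQ}+K_{44PQ})/√2, F³_{PQ} := (K_{55PQ}−K_{44PQ})/√2, F¹_{PQ} := (K_{45PQ}+K_{54PQ})/√2, F²_{PQ} := (K_{45PQ}−K_{54PQ})/√2. Then the following identities hold on U for all P,Q: B_{PQ} = ∂_PB_Q − ∂_QB_P; F³_{PQ} = ∂_PA³_Q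 − ∂_QA³_P + g(A¹_PA²_Q − A²_PA¹_Q); F¹_{PQ} = ∂_PA¹_Q − ∂_QA¹_P + g(A²_PA³_Q − A³_PA²_Q); F²_{PQ} = ∂_PA²_Q − ∂_QA²_P + g(A¹_PA³_Q − A³_PA¹_Q). -/
noncomputable section

/-- Partial derivative in the `P`-th coordinate direction of `ℝ⁵`. -/
def pd (P : Fin 5) (f : (Fin 5 → ℝ) → ℝ) (x : Fin 5 → ℝ) : ℝ :=
  fderiv ℝ f x (Pi.single P 1)

/-- Internal curvature `K_{mnPQ}` of the internal connection `Γ_{mnP}`;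
internal index `i : Fin 2` corresponds to the coordinate direction `4 + i`,
and `Ginv h` is the constant inverse-metric component `G^{hh}`. -/
def K (Ginv : Fin 2 → ℝ) (Γ : Fin 2 → Fin 2 → Fin 5 → (Fin 5 → ℝ) → ℝ)
    (m n : Fin 2) (P Q : Fin 5) (x : Fin 5 → ℝ) : ℝ :=
  pd P (Γ m n Q) x - pd Q (Γ m n P) x
    + ∑ h : Fin 2, Ginv h * (Γ m h P x * Γ h n Q x - Γ h n P x * Γ m h Q x)

theorem pd_add_div (P : Fin 5) (f u v : (Fin 5 → ℝ) → ℝ) (c : ℝ) (x : Fin 5 → ℝ)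
    (hu : DifferentiableAt ℝ u x) (hv : DifferentiableAt ℝ v x)
    (hf : ∀ y, f y = (u y + v y) / c) : pd P f x = (pd P u x + pd P v x) / c := by
  have h : HasFDerivAt f (c⁻¹ • (fderiv ℝ u x + fderiv ℝ v x)) x := by
    have e : f = fun y => c⁻¹ • (u y + v y) := by
      funext y; rw [hf, smul_eq_mul]; ring
    rw [e]
    exact (hu.hasFDerivAt.add hv.hasFDerivAt).const_smul c⁻¹
  unfold pd
  rw [h.fderiv]
  simp only [ContinuousLinearMap.smul_apply, ContinuousLinearMap.add_apply, smul_eq_mul]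
  ring

theorem pd_sub_div (P : Fin 5) (f u v : (Fin 5 → ℝ) → ℝ) (c : ℝ) (x : Fin 5 → ℝ)
    (hu : DifferentiableAt ℝ u x) (hv : DifferentiableAt ℝ v x)
    (hf : ∀ y, f y = (u y - v y) / c) : pd P f x = (pd P u x - pd P v x) / c := by
  have h : HasFDerivAt f (c⁻¹ • (fderiv ℝ u x - fderiv ℝ v x)) x := by
    have e : f = fun y => c⁻¹ • (u y - v y) := by
      funext y; rw [hf, smul_eq_mul]; ring
    rw [e]
    exact (hu.hasFDerivAt.sub hv.hasFDerivAt).const_smul c⁻¹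
  unfold pd
  rw [h.fderiv]
  simp only [ContinuousLinearMap.smul_apply, ContinuousLinearMap.sub_apply, smul_eq_mul]
  ring

/-- **Weak–electromagnetic field strengths take Yang–Mills form** (𝔇 = 5):
with `B_P := (Γ₅₅P+Γ₄₄P)/√2`, `A³_P := (Γ₅₅P−Γ₄₄P)/√2`, `A¹_P := (Γ₄₅P+Γ₅₄P)/√2`,
`A²_P := (Γ₄₅P−Γ₅₄P)/√2`, and `g := √((G⁴⁴)²+(G⁵⁵)²)`, the field strengths
`B_{PQ} := (K₅₅PQ+K₄₄PQ)/√2` etc. satisfy abelian and SU(2)-type identities. -/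
theorem stmt_3
    (U : Set (Fin 5 → ℝ)) (hU : IsOpen U)
    (Γ : Fin 2 → Fin 2 → Fin 5 → (Fin 5 → ℝ) → ℝ)
    (hΓ : ∀ m n P, ∀ x ∈ U, DifferentiableAt ℝ (Γ m n P) x)
    (G4 G5 : ℝ) (hGeq : G4 = G5) (hGpos : 0 < G4)
    (g : ℝ) (hg : g = Real.sqrt (G4 ^ 2 + G5 ^ 2))
    (Ginv : Fin 2 → ℝ) (hGinv : Ginv = ![G4, G5])
    (B A1 A2 A3 : Fin 5 → (Fin 5 → ℝ) → ℝ)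
    (hB : ∀ P x, B P x = (Γ 1 1 P x + Γ 0 0 P x) / Real.sqrt 2)
    (hA3 : ∀ P x, A3 P x = (Γ 1 1 P x - Γ 0 0 P x) / Real.sqrt 2)
    (hA1 : ∀ P x, A1 P x = (Γ 0 1 P x + Γ 1 0 P x) / Real.sqrt 2)
    (hA2 : ∀ P x, A2 P x = (Γ 0 1 P x - Γ 1 0 P x) / Real.sqrt 2)
    (BF F1 F2 F3 : Fin 5 → Fin 5 → (Fin 5 → ℝ) → ℝ)
    (hBF : ∀ P Q x, BF P Q x = (K Ginv Γ 1 1 P Q x + K Ginv Γ 0 0 P Q x) / Real.sqrt 2)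
    (hF3 : ∀ P Q x, F3 P Q x = (K Ginv Γ 1 1 P Q x - K Ginv Γ 0 0 P Q x) / Real.sqrt 2)
    (hF1 : ∀ P Q x, F1 P Q x = (K Ginv Γ 0 1 P Q x + K Ginv Γ 1 0 P Q x) / Real.sqrt 2)
    (hF2 : ∀ P Q x, F2 P Q x = (K Ginv Γ 0 1 P Q x - K Ginv Γ 1 0 P Q x) / Real.sqrt 2) :
    ∀ x ∈ U, ∀ P Q : Fin 5,
      BF P Q x = pd P (B Q) x - pd Q (B P) x ∧
      F3 P Q x = pd P (A3 Q) x - pd Q (A3 P) x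
          + g * (A1 P x * A2 Q x - A2 P x * A1 Q x) ∧
      F1 P Q x = pd P (A1 Q) x - pd Q (A1 P) x
          + g * (A2 P x * A3 Q x - A3 P x * A2 Q x) ∧
      F2 P Q x = pd P (A2 Q) x - pd Q (A2 P) x
          + g * (A1 P x * A3 Q x - A3 P x * A1 Q x) := by
  intro x hx P Q
  subst hGeq
  have hs : Real.sqrt 2 ≠ 0 := by positivity
  have hs2 : Real.sqrt 2 ^ 2 = 2 := Real.sq_sqrt (by norm_num)
  have hg' : g = Real.sqrt 2 * G4 := by
    rw [hg, ← two_mul, Real.sqrt_mul (by norm_num), Real.sqrt_sq hGpos.le]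
  have dB : ∀ R S, pd R (B S) x = _ := fun R S =>
    pd_add_div R (B S) _ _ _ x (hΓ 1 1 S x hx) (hΓ 0 0 S x hx) (hB S)
  have d3 : ∀ R S, pd R (A3 S) x = _ := fun R S =>
    pd_sub_div R (A3 S) _ _ _ x (hΓ 1 1 S x hx) (hΓ 0 0 S x hx) (hA3 S)
  have d1 : ∀ R S, pd R (A1 S) x = _ := fun R S =>
    pd_add_div R (A1 S) _ _ _ x (hΓ 0 1 S x hx) (hΓ 1 0 S x hx) (hA1 S)
  have d2 : ∀ R S, pd R (A2 S) x = _ := fun R S =>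
    pd_sub_div R (A2 S) _ _ _ x (hΓ 0 1 S x hx) (hΓ 1 0 S x hx) (hA2 S)
  have k0 : Ginv 0 = G4 := by rw [hGinv]; rfl
  have k1 : Ginv 1 = G4 := by rw [hGinv]; rfl
  rw [hBF, hF3, hF1, hF2, dB, dB, d3, d3, d1, d1, d2, d2, hg']
  simp only [hA1, hA2, hA3, K, Fin.sum_univ_two, k0, k1]
  refine ⟨?_, ?_, ?_, ?_⟩ <;> field_simp <;> (try simp only [hs2]) <;> ring

end
end

section
/- Let U ⊆ ℝ⁵ be open, let ρ_{mn} : U → ℝ be differentiable and Γ_{mnP} : U → ℝ be functions for internal indices m,n ∈ {4,5} and P ∈ {1,…,5}, and let G⁴⁴ = G⁵⁵ > 0 be real constants with g := √((G⁴⁴)²+(G⁵⁵)²). Assume the symmetry condition Γ_{45P} = Γ_{54P} for all P. With Γ^h_{mP} := G^{hh}Γ_{hmP} (no sum), define the internal covariant derivative ρ_{mn;P} := ∂_Pρ_{mn} − Σ_{h∈{4,5}}(ρ_{hn}Γ^h_{mP} + ρ_{mh}Γ^h_{nP}). Define l_L := (ρ₄₄+ρ₅₅)/√2, l_R := (ρ₄₄−ρ₅₅)/√2,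 ν_L := (ρ₅₄+ρ₄₅)/√2, ν_R := (ρ₅₄−ρ₄₅)/√2, with l_{L;P} := (ρ_{44;P}+ρ_{55;P})/√2, l_{R;P} := (ρ_{44;P}−ρ_{55;P})/√2, ν_{L;P} := (ρ_{54;P}+ρ_{45;P})/√2, ν_{R;P} := (ρ_{54;P}−ρ_{45;P})/√2, and the gauge potentials Z_P := (Γ_{44P}+Γ_{55P})/√2, A_P := (Γ_{44P}−Γ_{55P})/√2, W¹_P := (Γ_{45P}+Γ_{54P})/√2. Then on U, for all P: l_{L;P} = ∂_Pl_L − g·l_L·Z_P − g·l_R·A_P − g·ν_L·W¹_P; l_{R;P} = ∂_Pl_R − g·l_R·Z_P − g·l_L·A_P; ν_{L;P} = ∂_Pν_L − g·ν_L·Z_P − g·l_L·W¹_P; ν_{R;P} = ∂_Pν_R − g·ν_R·Z_P. In particular the right-handed neutrino ν_R couples neither to the electromagnetic potential A_P nor to W¹_P, and ν_L does not couple to A_P (chiral asymmetry arises spontaneously). -/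
noncomputable section

/-- Internal covariant derivative
`ρ_{mn;P} := ∂_P ρ_{mn} − Σ_h (ρ_{hn} Γ^h_{mP} + ρ_{mh} Γ^h_{nP})`, with
`Γ^h_{mP} := G^{hh} Γ_{hmP}` (no sum); internal index `i : Fin 2` corresponds
to the coordinate direction `4 + i`. -/
def covD (Ginv : Fin 2 → ℝ) (Γ : Fin 2 → Fin 2 → Fin 5 → (Fin 5 → ℝ) → ℝ)
    (ρ : Fin 2 → Fin 2 → (Fin 5 → ℝ) → ℝ) (m n : Fin 2) (P : Fin 5)
    (x : Fin 5 → ℝ) : ℝ :=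
  pd P (ρ m n) x
    - ∑ h : Fin 2, (ρ h n x * (Ginv h * Γ h m P x) + ρ m h x * (Ginv h * Γ h n P x))

/-- **Chiral asymmetry of leptons arises spontaneously** (𝔇 = 5):
under the symmetry condition `Γ₄₅P = Γ₅₄P`, the left/right charged lepton
and neutrino combinations satisfy the stated coupled evolution equations;
in particular `ν_R` couples neither to `A_P` nor to `W¹_P`. -/
theorem stmt_4
    (U : Set (Fin 5 → ℝ)) (hU : IsOpen U)
    (ρ : Fin 2 → Fin 2 → (Fin 5 → ℝ) → ℝ)
    (hρ : ∀ m n, ∀ x ∈ U, DifferentiableAt ℝ (ρ m n) x)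
    (Γ : Fin 2 → Fin 2 → Fin 5 → (Fin 5 → ℝ) → ℝ)
    (G4 G5 : ℝ) (hGeq : G4 = G5) (hGpos : 0 < G4)
    (g : ℝ) (hg : g = Real.sqrt (G4 ^ 2 + G5 ^ 2))
    (Ginv : Fin 2 → ℝ) (hGinv : Ginv = ![G4, G5])
    (hsym : ∀ P : Fin 5, ∀ x ∈ U, Γ 0 1 P x = Γ 1 0 P x)
    (lL lR νL νR : (Fin 5 → ℝ) → ℝ)
    (hlL : ∀ x, lL x = (ρ 0 0 x + ρ 1 1 x) / Real.sqrt 2)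
    (hlR : ∀ x, lR x = (ρ 0 0 x - ρ 1 1 x) / Real.sqrt 2)
    (hνL : ∀ x, νL x = (ρ 1 0 x + ρ 0 1 x) / Real.sqrt 2)
    (hνR : ∀ x, νR x = (ρ 1 0 x - ρ 0 1 x) / Real.sqrt 2)
    (Z A W1 : Fin 5 → (Fin 5 → ℝ) → ℝ)
    (hZ : ∀ P x, Z P x = (Γ 0 0 P x + Γ 1 1 P x) / Real.sqrt 2)
    (hA : ∀ P x, A P x = (Γ 0 0 P x - Γ 1 1 P x) / Real.sqrt 2)
    (hW1 : ∀ P x, W1 P x = (Γ 0 1 P x + Γ 1 0 P x) / Real.sqrt 2) :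
    ∀ x ∈ U, ∀ P : Fin 5,
      (covD Ginv Γ ρ 0 0 P x + covD Ginv Γ ρ 1 1 P x) / Real.sqrt 2
          = pd P lL x - g * lL x * Z P x - g * lR x * A P x - g * νL x * W1 P x ∧
      (covD Ginv Γ ρ 0 0 P x - covD Ginv Γ ρ 1 1 P x) / Real.sqrt 2
          = pd P lR x - g * lR x * Z P x - g * lL x * A P x ∧
      (covD Ginv Γ ρ 1 0 P x + covD Ginv Γ ρ 0 1 P x) / Real.sqrt 2
          = pd P νL x - g * νL x * Z P x - g * lL x * W1 P x ∧
      (covD Ginv Γ ρ 1 0 P x - covD Ginv Γ ρ 0 1 P x) / Real.sqrt 2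
          = pd P νR x - g * νR x * Z P x := by
  intro x hx P
  have hs0 : Real.sqrt 2 ≠ 0 := by positivity
  have hs2 : Real.sqrt 2 * Real.sqrt 2 = 2 := Real.mul_self_sqrt (by norm_num)
  subst hGeq
  have hg' : g = Real.sqrt 2 * G4 := by
    rw [hg, ← two_mul, Real.sqrt_mul (by norm_num), Real.sqrt_sq hGpos.le]
  have hadd : ∀ (a b c d : Fin 2) (f : (Fin 5 → ℝ) → ℝ),
      (∀ y, f y = (ρ a b y + ρ c d y) / Real.sqrt 2) →
      pd P f x = (pd P (ρ a b) x + pd P (ρ c d) x) / Real.sqrt 2 := by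
    intro a b c d f hf
    have h := ((hρ a b x hx).hasFDerivAt.add (hρ c d x hx).hasFDerivAt).const_mul
      (Real.sqrt 2)⁻¹
    have hfe : f = fun y => (Real.sqrt 2)⁻¹ * (ρ a b + ρ c d) y := by
      funext y
      rw [hf y, Pi.add_apply, div_eq_inv_mul]
    rw [← hfe] at h
    simp only [pd, h.fderiv]
    simp [div_eq_inv_mul]
    try ring
  have hsub : ∀ (a b c d : Fin 2) (f : (Fin 5 → ℝ) → ℝ),
      (∀ y, f y = (ρ a b y - ρ c d y) / Real.sqrt 2) →
      pd P f x = (pd P (ρ a b) x - pd P (ρ c d) x) / Real.sqrt 2 := by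
    intro a b c d f hf
    have h := ((hρ a b x hx).hasFDerivAt.sub (hρ c d x hx).hasFDerivAt).const_mul
      (Real.sqrt 2)⁻¹
    have hfe : f = fun y => (Real.sqrt 2)⁻¹ * (ρ a b - ρ c d) y := by
      funext y
      rw [hf y, Pi.sub_apply, div_eq_inv_mul]
    rw [← hfe] at h
    simp only [pd, h.fderiv]
    simp [div_eq_inv_mul]
    try ring
  rw [hadd _ _ _ _ lL hlL, hsub _ _ _ _ lR hlR, hadd _ _ _ _ νL hνL, hsub _ _ _ _ νR hνR]
  have e := hsym P x hx
  have hG0 : Ginv 0 = G4 := by rw [hGinv]; rfl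
  have hG1 : Ginv 1 = G4 := by rw [hGinv]; rfl
  simp only [covD, Fin.sum_univ_two, hG0, hG1, hlL, hlR, hνL, hνR, hZ, hA, hW1, e, hg']
  have hs3 : Real.sqrt 2 ^ 2 = 2 := by rw [sq, hs2]
  refine ⟨?_, ?_, ?_, ?_⟩ <;>
  · field_simp
    try rw [hs3]
    try ring

end
end

section
/- Let n be a finite type, D ≥ 1, γ : Fin D → Matrix n n ℂ, let U ⊆ ℝ^D be open, let f, Y : U → ℝ be differentiable at a point x ∈ U, and let Φ_P, M : U → ℝ be arbitrary functions. Define ψ := (fun z => (f z : ℂ) · exp(i · Y z)) and ψ̄ := (fun z => (f z : ℂ) · exp(−i · Y z)). Suppose that at x the condition Σ_P ((∂_P f)(x) : ℂ) • γ_P = 0 holds. Then −ψ̄(x) • (Σ_P (i : ℂ) • (γ_P * ((∂_Pψ)(x) • 1 − (i · Φ_P(x) · ψ(x)) • 1))) + (ψ̄(x) · (M(x) : ℂ) · ψ(x)) • 1 = (f(x)² : ℂ) • (Σ_P (((∂_PY)(x) − Φ_P(x)) : ℂ) • γ_P + (M(x) : ℂ) • 1); equivalently, −ψ̄ Σ_P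 iγ_P(∂_Pψ − iΦ_Pψ) + ψ̄Mψ·1 = f²·(Σ_P(∂_PY − Φ_P)γ_P + M·1) at x. -/
noncomputable section

open Complex Matrix

/-- Partial derivative in the `P`-th coordinate direction of `ℝ^D`
(real-valued functions). -/
def pdR (D : ℕ) (P : Fin D) (f : (Fin D → ℝ) → ℝ) (x : Fin D → ℝ) : ℝ :=
  fderiv ℝ f x (Pi.single P 1)

/-- Partial derivative in the `P`-th coordinate direction of `ℝ^D`
(complex-valued functions). -/
def pdC (D : ℕ) (P : Fin D) (f : (Fin D → ℝ) → ℂ) (x : Fin D → ℝ) : ℂ :=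
  fderiv ℝ f x (Pi.single P 1)

/-- **Dirac-Lagrangian form of the affine action** (pointwise identity):
with `ψ := f e^{iY}`, `ψ̄ := f e^{−iY}`, and `Σ_P (∂_P f)(x) • γ_P = 0`,
`−ψ̄ Σ_P iγ_P(∂_Pψ − iΦ_Pψ) + ψ̄Mψ·1 = f²·(Σ_P(∂_PY − Φ_P)γ_P + M·1)` at `x`. -/
theorem stmt_11 (n : Type*) [Fintype n] [DecidableEq n]
    (D : ℕ) (hD : 1 ≤ D) (γ : Fin D → Matrix n n ℂ)
    (U : Set (Fin D → ℝ)) (hU : IsOpen U) (x : Fin D → ℝ) (hx : x ∈ U)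
    (f Y : (Fin D → ℝ) → ℝ)
    (hf : DifferentiableAt ℝ f x) (hY : DifferentiableAt ℝ Y x)
    (Φ : Fin D → (Fin D → ℝ) → ℝ) (M : (Fin D → ℝ) → ℝ)
    (ψ ψb : (Fin D → ℝ) → ℂ)
    (hψ : ψ = fun z => (f z : ℂ) * Complex.exp (Complex.I * (Y z : ℂ)))
    (hψb : ψb = fun z => (f z : ℂ) * Complex.exp (-Complex.I * (Y z : ℂ)))
    (hcond : ∑ P, ((pdR D P f x : ℝ) : ℂ) • γ P = 0) :
    -(ψb x) • (∑ P, (Complex.I) • (γ P *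
        ((pdC D P ψ x) • (1 : Matrix n n ℂ)
          - (Complex.I * (Φ P x : ℂ) * ψ x) • (1 : Matrix n n ℂ))))
      + (ψb x * (M x : ℂ) * ψ x) • (1 : Matrix n n ℂ)
    = (((f x) ^ 2 : ℝ) : ℂ) •
        (∑ P, (((pdR D P Y x - Φ P x : ℝ)) : ℂ) • γ P
          + ((M x : ℝ) : ℂ) • (1 : Matrix n n ℂ)) := by
  have hd : ∀ P, pdC D P ψ x = ((pdR D P f x : ℂ) + Complex.I * (f x : ℂ) * (pdR D P Y x : ℂ))
      * Complex.exp (Complex.I * (Y x : ℂ)) := by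
    intro P
    have h1 : HasFDerivAt (fun z => (f z : ℂ)) (Complex.ofRealCLM.comp (fderiv ℝ f x)) x :=
      Complex.ofRealCLM.hasFDerivAt.comp x hf.hasFDerivAt
    have h2 : HasFDerivAt (fun z => (Y z : ℂ)) (Complex.ofRealCLM.comp (fderiv ℝ Y x)) x :=
      Complex.ofRealCLM.hasFDerivAt.comp x hY.hasFDerivAt
    have h3 := h1.mul (h2.const_mul Complex.I).cexp
    have h5 : ψ = (fun z => (f z : ℂ)) * fun z => Complex.exp (Complex.I * (Y z : ℂ)) := hψ
    have h4 := h3.fderiv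
    rw [← h5] at h4
    unfold pdC pdR
    rw [h4]
    simp
    ring
  have he : Complex.exp (-Complex.I * (Y x : ℂ)) * Complex.exp (Complex.I * (Y x : ℂ)) = 1 := by
    rw [← Complex.exp_add]
    simp
  have e1 : ψ x = (f x : ℂ) * Complex.exp (Complex.I * (Y x : ℂ)) := by rw [hψ]
  have e2 : ψb x = (f x : ℂ) * Complex.exp (-Complex.I * (Y x : ℂ)) := by rw [hψb]
  have hM : ψb x * (M x : ℂ) * ψ x = (((f x) ^ 2 : ℝ) : ℂ) * (M x : ℂ) := by
    rw [e1, e2]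
    push_cast
    linear_combination (f x : ℂ) ^ 2 * (M x : ℂ) * he
  have hs : -(ψb x) • (∑ P, (Complex.I) • (γ P *
        ((pdC D P ψ x) • (1 : Matrix n n ℂ)
          - (Complex.I * (Φ P x : ℂ) * ψ x) • (1 : Matrix n n ℂ))))
      = (-(Complex.I * (f x : ℂ))) • (∑ P, ((pdR D P f x : ℝ) : ℂ) • γ P)
        + (((f x) ^ 2 : ℝ) : ℂ) • ∑ P, (((pdR D P Y x - Φ P x : ℝ)) : ℂ) • γ P := by
    rw [Finset.smul_sum, Finset.smul_sum, Finset.smul_sum, ← Finset.sum_add_distrib]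
    refine Finset.sum_congr rfl fun P _ => ?_
    rw [← sub_smul, mul_smul_comm, mul_one, smul_smul, smul_smul, smul_smul, smul_smul, ← add_smul]
    congr 1
    rw [hd, e1, e2]
    push_cast
    linear_combination (-(f x : ℂ) * Complex.I * ((pdR D P f x : ℂ)
      + Complex.I * (f x : ℂ) * (pdR D P Y x : ℂ) - Complex.I * (Φ P x : ℂ) * (f x : ℂ))) * he
      - (f x : ℂ) ^ 2 * ((pdR D P Y x : ℂ) - (Φ P x : ℂ)) * Complex.I_sq
  rw [hs, hcond, hM, smul_zero, zero_add, smul_add, smul_smul]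

end
end
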